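/- arXiv:2602.02147 — 2 statements merged into one kernel-verified Lean document; each statement's English description precedes it below -/
import Mathlib

section
/- Let H be a real inner product space, let μ ∈ (0,1) and α > 0 be real, and let θ, θ*, g_CL, g_HPE ∈ H satisfy ‖θ − θ*‖ ≤ D, ‖g_CL‖ ≤ G_benign, and ‖g_HPE‖ ≤ G_attack for constants D, G_benign, G_attack > 0. Define the updated point θ' = θ − α · ((1−μ)·g_CL + μ·g_HPE). Then ⟨g_CL, θ − θ*⟩ ≤ (‖θ − θ*‖² − ‖θ' − θ*‖²) / (2α(1−μ)) + μ·D·G_attack / (1−μ) + α·(G_benign + G_attack)² / (2(1−μ)). -/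
/-!
Expanding `‖d - α • v‖ ^ 2`, with `d = θ - θ*` and `v` the mixed gradient, bounds `⟪v, d⟫` by the
decrease of the squared distance plus a term of second order in the step. Since `⟪v, d⟫` is
`(1 - μ) * ⟪gCL, d⟫ + μ * ⟪gHPE, d⟫`, it remains to bound the attack term below by Cauchy–Schwarz
and divide by `1 - μ`.
-/

open RealInnerProductSpace

theorem norm_smul_add_smul_le_add_norm {𝕜 E : Type*} [SeminormedRing 𝕜]
    [SeminormedAddCommGroup E] [Module 𝕜 E] [IsBoundedSMul 𝕜 E] {a b : 𝕜}
    (ha : ‖a‖ ≤ 1) (hb : ‖b‖ ≤ 1) (x y : E) :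
    ‖a • x + b • y‖ ≤ ‖x‖ + ‖y‖ :=
  norm_add_le_of_le
    ((norm_smul_le a x).trans (mul_le_of_le_one_left (norm_nonneg x) ha))
    ((norm_smul_le b y).trans (mul_le_of_le_one_left (norm_nonneg y) hb))

section InnerProductSpace

variable {E : Type*} [SeminormedAddCommGroup E] [InnerProductSpace ℝ E]

theorem neg_mul_le_real_inner {x y : E} {r s : ℝ} (hx : ‖x‖ ≤ r) (hy : ‖y‖ ≤ s) :
    -(r * s) ≤ ⟪x, y⟫ :=
  neg_le_of_abs_le <| (abs_real_inner_le_norm x y).trans <|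
    mul_le_mul hx hy (norm_nonneg y) ((norm_nonneg x).trans hx)

theorem norm_sub_smul_sq_real (α : ℝ) (x v : E) :
    ‖x - α • v‖ ^ 2 = ‖x‖ ^ 2 - 2 * α * ⟪v, x⟫ + α ^ 2 * ‖v‖ ^ 2 := by
  rw [norm_sub_sq_real, real_inner_smul_right, real_inner_comm, norm_smul, mul_pow,
    Real.norm_eq_abs, sq_abs]
  ring

theorem real_inner_le_norm_sq_sub_norm_sub_smul_sq_div_add {α G : ℝ} {v : E} (hα : 0 < α)
    (hv : ‖v‖ ≤ G) (x : E) :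
    ⟪v, x⟫ ≤ (‖x‖ ^ 2 - ‖x - α • v‖ ^ 2) / (2 * α) + α * G ^ 2 / 2 :=
  calc ⟪v, x⟫ = (‖x‖ ^ 2 - ‖x - α • v‖ ^ 2) / (2 * α) + α * ‖v‖ ^ 2 / 2 := by
        rw [norm_sub_smul_sq_real]
        field_simp
        ring
    _ ≤ (‖x‖ ^ 2 - ‖x - α • v‖ ^ 2) / (2 * α) + α * G ^ 2 / 2 := by gcongr

end InnerProductSpace

theorem hpe_per_step_inequality_general
    {H : Type*} [SeminormedAddCommGroup H] [InnerProductSpace ℝ H]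
    {μ α D Gbenign Gattack : ℝ} (hμ : μ ∈ Set.Ico (0 : ℝ) 1) (hα : 0 < α)
    {θ θstar gCL gHPE : H} (hdist : ‖θ - θstar‖ ≤ D)
    (hgCL : ‖gCL‖ ≤ Gbenign) (hgHPE : ‖gHPE‖ ≤ Gattack)
    {θ' : H} (hθ' : θ' = θ - α • ((1 - μ) • gCL + μ • gHPE)) :
    ⟪gCL, θ - θstar⟫ ≤
      (‖θ - θstar‖ ^ 2 - ‖θ' - θstar‖ ^ 2) / (2 * α * (1 - μ))
        + μ * D * Gattack / (1 - μ)
        + α * (Gbenign + Gattack) ^ 2 / (2 * (1 - μ)) := by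
  obtain ⟨hμ_nonneg, hμ_lt_one⟩ := hμ
  have hμ_compl : 0 < 1 - μ := sub_pos.mpr hμ_lt_one
  set v := (1 - μ) • gCL + μ • gHPE with hv
  have hμ_norm : ‖μ‖ ≤ 1 := by rw [Real.norm_of_nonneg hμ_nonneg]; exact hμ_lt_one.le
  have hμ_compl_norm : ‖1 - μ‖ ≤ 1 := by rw [Real.norm_of_nonneg hμ_compl.le]; linarith
  have hv_norm : ‖v‖ ≤ Gbenign + Gattack :=
    (norm_smul_add_smul_le_add_norm hμ_compl_norm hμ_norm gCL gHPE).trans (add_le_add hgCL hgHPE)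
  have hdescent : ⟪v, θ - θstar⟫ ≤ (‖θ - θstar‖ ^ 2 - ‖θ' - θstar‖ ^ 2) / (2 * α)
      + α * (Gbenign + Gattack) ^ 2 / 2 := by
    rw [hθ', sub_right_comm]
    exact real_inner_le_norm_sq_sub_norm_sub_smul_sq_div_add hα hv_norm (θ - θstar)
  have hsplit : ⟪v, θ - θstar⟫ = (1 - μ) * ⟪gCL, θ - θstar⟫ + μ * ⟪gHPE, θ - θstar⟫ := by
    rw [hv, inner_add_left, real_inner_smul_left, real_inner_smul_left]
  have hattack : μ * -(Gattack * D) ≤ μ * ⟪gHPE, θ - θstar⟫ :=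
    mul_le_mul_of_nonneg_left (neg_mul_le_real_inner hgHPE hdist) hμ_nonneg
  calc ⟪gCL, θ - θstar⟫
      ≤ ((‖θ - θstar‖ ^ 2 - ‖θ' - θstar‖ ^ 2) / (2 * α) + μ * D * Gattack
          + α * (Gbenign + Gattack) ^ 2 / 2) / (1 - μ) := by
        rw [le_div_iff₀' hμ_compl]
        linarith
    _ = _ := by simp only [add_div, div_div]

/-- Per-step inequality (Eq. (16)) for one step of gradient descent on the mixed loss
whose gradient is `(1-μ)·g_CL + μ·g_HPE`. -/
theorem hpe_per_step_inequality
    {H : Type*} [NormedAddCommGroup H] [InnerProductSpace ℝ H]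
    (μ α D Gbenign Gattack : ℝ)
    (hμ : μ ∈ Set.Ioo (0 : ℝ) 1) (hα : 0 < α)
    (hD : 0 < D) (hGb : 0 < Gbenign) (hGa : 0 < Gattack)
    (θ θstar gCL gHPE : H)
    (hdist : ‖θ - θstar‖ ≤ D)
    (hgCL : ‖gCL‖ ≤ Gbenign) (hgHPE : ‖gHPE‖ ≤ Gattack)
    (θ' : H) (hθ' : θ' = θ - α • ((1 - μ) • gCL + μ • gHPE)) :
    ⟪gCL, θ - θstar⟫ ≤
      (‖θ - θstar‖ ^ 2 - ‖θ' - θstar‖ ^ 2) / (2 * α * (1 - μ))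
        + μ * D * Gattack / (1 - μ)
        + α * (Gbenign + Gattack) ^ 2 / (2 * (1 - μ)) :=
  hpe_per_step_inequality_general (Set.Ioo_subset_Ico_self hμ) hα hdist hgCL hgHPE hθ'
end

section
/- Let H be a real inner product space. Suppose L_CL : H → ℝ and L_HPE : H → ℝ are differentiable, L_CL is convex (i.e., L_CL(θ₂) ≥ L_CL(θ₁) + ⟨∇L_CL(θ₁), θ₂ − θ₁⟩ for all θ₁, θ₂ ∈ H), ‖∇L_CL(θ)‖ ≤ G_benign and ‖∇L_HPE(θ)‖ ≤ G_attack for all θ ∈ H, with G_benign, G_attack > 0. Fix μ ∈ (0,1), C > 0, p ∈ (0,1), and set α_t = C / t^p. Let (θ^t)_{t≥1} evolve by θ^{t+1} = θ^t − α_t · ((1−μ)∇L_CL(θ^t) + μ∇L_HPE(θ^t)), and let θ* ∈ H satisfy ‖θ^t − θ*‖ ≤ D for all t ≥ 1 with D > 0. Then for every integer T ≥ 1, Σ_{t=1}^{T} (L_CL(θ^t) − L_CL(θ*)) ≤ D²·T^p / (2C(1−μ)) + μ·D·G_attack·T / (1−μ) + C·(G_benign + G_attack)²·T^{1−p} / (2(1−μ)(1−p)).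 -/
open RealInnerProductSpace

/-!
Let `x t` be the iterates, `z` the comparison point, `u t` the benign subgradients, `v t` the attack
gradients, bounded by `A`, and `g t = (1 - μ) u t + μ v t`. Expanding `‖x (t + 1) - z‖ ^ 2`
expresses `⟪g t, x t - z⟫` through the decrease of the squared distance to `z`, divided by `2 α t`,
plus `α t ‖g t‖ ^ 2 / 2`. The weights `1 / (2 α t)` increase while the distances stay below `D`, so
summation by parts leaves only `D ^ 2 / (2 α T)`. By convexity and Cauchy-Schwarz,
`⟪g t, x t - z⟫` dominates `1 - μ` times the benign regret up to `μ D A`. For `α t = C / t ^ p` the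
sum of the step sizes is controlled by the tangent lines of the concave function `s ↦ s ^ (1 - p)`.
-/

theorem sum_mul_sub_succ_le {R : Type*} [CommRing R] [PartialOrder R] [IsOrderedRing R]
    {w d : ℕ → R} {M : R} (hw_nonneg : 0 ≤ w 1) (hw : MonotoneOn w (Set.Ici 1))
    (hd : ∀ t, 1 ≤ t → d t ≤ M) {T : ℕ} (hT : 1 ≤ T) :
    ∑ t ∈ Finset.Icc 1 T, w t * (d t - d (t + 1)) ≤ w T * (M - d (T + 1)) := by
  induction T, hT using Nat.le_induction with
  | base => simpa using mul_le_mul_of_nonneg_left (sub_le_sub_right (hd 1 le_rfl) (d 2)) hw_nonneg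
  | succ T hT ih =>
    have hw_succ : w T ≤ w (T + 1) := hw hT (Nat.le_succ_of_le hT) T.le_succ
    have hgap : 0 ≤ M - d (T + 1) := sub_nonneg.2 (hd (T + 1) (Nat.le_succ_of_le hT))
    calc ∑ t ∈ Finset.Icc 1 (T + 1), w t * (d t - d (t + 1))
        = ∑ t ∈ Finset.Icc 1 T, w t * (d t - d (t + 1))
          + w (T + 1) * (d (T + 1) - d (T + 2)) := Finset.sum_Icc_succ_top (by lia) _
      _ ≤ w T * (M - d (T + 1)) + w (T + 1) * (d (T + 1) - d (T + 2)) := by gcongr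
      _ ≤ w (T + 1) * (M - d (T + 1)) + w (T + 1) * (d (T + 1) - d (T + 2)) := by gcongr
      _ = w (T + 1) * (M - d (T + 2)) := by ring

theorem one_sub_mul_sub_div_rpow_le {p x y : ℝ} (hp0 : 0 ≤ p) (hp1 : p ≤ 1) (hx : 0 ≤ x)
    (hy : 0 < y) : (1 - p) * (y - x) / y ^ p ≤ y ^ (1 - p) - x ^ (1 - p) := by
  have hamgm : x ^ (1 - p) * y ^ p ≤ (1 - p) * x + p * y :=
    Real.geom_mean_le_arith_mean2_weighted (sub_nonneg.2 hp1) hp0 hx hy.le (sub_add_cancel 1 p)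
  have hy_mul : y ^ (1 - p) * y ^ p = y := by
    rw [← Real.rpow_add hy, sub_add_cancel, Real.rpow_one]
  rw [div_le_iff₀ (Real.rpow_pos_of_pos hy p), sub_mul (y ^ (1 - p)), hy_mul]
  linarith

theorem sum_Icc_one_div_rpow_le {p : ℝ} (hp0 : 0 ≤ p) (hp1 : p < 1) (T : ℕ) :
    ∑ t ∈ Finset.Icc 1 T, 1 / (t : ℝ) ^ p ≤ (T : ℝ) ^ (1 - p) / (1 - p) := by
  have hq : 0 < 1 - p := sub_pos.2 hp1
  induction T with
  | zero => simp [Real.zero_rpow hq.ne']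
  | succ T ih =>
    have hincr : 1 / ((T + 1 : ℕ) : ℝ) ^ p
        ≤ (((T + 1 : ℕ) : ℝ) ^ (1 - p) - (T : ℝ) ^ (1 - p)) / (1 - p) := by
      rw [le_div_iff₀ hq, one_div_mul_eq_div]
      simpa using one_sub_mul_sub_div_rpow_le hp0 hp1.le T.cast_nonneg
        (Nat.cast_pos.2 T.succ_pos : (0 : ℝ) < (T + 1 : ℕ))
    rw [sub_div] at hincr
    rw [Finset.sum_Icc_succ_top (Nat.le_add_left 1 T)]
    linarith

theorem antitoneOn_div_rpow {C p : ℝ} (hC : 0 ≤ C) (hp : 0 ≤ p) :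
    AntitoneOn (fun t : ℕ ↦ C / (t : ℝ) ^ p) (Set.Ici 1) := by
  intro s hs t _ hst
  have hs_pos : (0 : ℝ) < s := Nat.cast_pos.2 hs
  dsimp only
  gcongr

theorem norm_one_sub_smul_add_smul_le {E : Type*} [SeminormedAddCommGroup E] [NormedSpace ℝ E]
    (u v : E) {μ : ℝ} (hμ0 : 0 ≤ μ) (hμ1 : μ ≤ 1) :
    ‖(1 - μ) • u + μ • v‖ ≤ ‖u‖ + ‖v‖ := by
  refine norm_add_le_of_le ?_ ?_
  · rw [norm_smul_of_nonneg (sub_nonneg.2 hμ1)]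
    exact mul_le_of_le_one_left (norm_nonneg u) (sub_le_self 1 hμ0)
  · rw [norm_smul_of_nonneg hμ0]
    exact mul_le_of_le_one_left (norm_nonneg v) hμ1

section Regret

variable {H : Type*} [SeminormedAddCommGroup H] [InnerProductSpace ℝ H]

theorem inner_eq_norm_sq_sub_norm_sub_smul_sq_div (g w : H) {a : ℝ} (ha : a ≠ 0) :
    ⟪g, w⟫ = 1 / (2 * a) * (‖w‖ ^ 2 - ‖w - a • g‖ ^ 2) + a * ‖g‖ ^ 2 / 2 := by
  rw [norm_sub_sq_real, real_inner_smul_right, real_inner_comm, norm_smul, mul_pow,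
    Real.norm_eq_abs, sq_abs]
  field_simp
  ring

theorem sum_inner_le_of_antitoneOn {x g : ℕ → H} {a : ℕ → ℝ} {z : H} {D : ℝ}
    (ha_pos : ∀ t, 1 ≤ t → 0 < a t) (ha : AntitoneOn a (Set.Ici 1))
    (hx : ∀ t, 1 ≤ t → x (t + 1) = x t - a t • g t) (hD : ∀ t, 1 ≤ t → ‖x t - z‖ ≤ D)
    {T : ℕ} (hT : 1 ≤ T) :
    ∑ t ∈ Finset.Icc 1 T, ⟪g t, x t - z⟫
      ≤ D ^ 2 / (2 * a T) + (∑ t ∈ Finset.Icc 1 T, a t * ‖g t‖ ^ 2) / 2 := by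
  have hstep (t : ℕ) (ht : t ∈ Finset.Icc 1 T) : ⟪g t, x t - z⟫
      = 1 / (2 * a t) * (‖x t - z‖ ^ 2 - ‖x (t + 1) - z‖ ^ 2) + a t * ‖g t‖ ^ 2 / 2 := by
    have ht1 := (Finset.mem_Icc.1 ht).1
    rw [hx t ht1, sub_right_comm]
    exact inner_eq_norm_sq_sub_norm_sub_smul_sq_div _ _ (ha_pos t ht1).ne'
  have hweight : MonotoneOn (fun t ↦ 1 / (2 * a t)) (Set.Ici 1) := fun s hs t ht hst ↦
    one_div_le_one_div_of_le (mul_pos two_pos (ha_pos t ht))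
      (mul_le_mul_of_nonneg_left (ha hs ht hst) zero_le_two)
  have hdist (t : ℕ) (ht : 1 ≤ t) : ‖x t - z‖ ^ 2 ≤ D ^ 2 :=
    pow_le_pow_left₀ (norm_nonneg _) (hD t ht) 2
  have ha_one := ha_pos 1 le_rfl
  have ha_T := ha_pos T hT
  have htelescope : ∑ t ∈ Finset.Icc 1 T, 1 / (2 * a t) * (‖x t - z‖ ^ 2 - ‖x (t + 1) - z‖ ^ 2)
      ≤ D ^ 2 / (2 * a T) :=
    calc _ ≤ 1 / (2 * a T) * (D ^ 2 - ‖x (T + 1) - z‖ ^ 2) :=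
          sum_mul_sub_succ_le (by positivity) hweight hdist hT
      _ ≤ 1 / (2 * a T) * D ^ 2 := by
          gcongr
          exact sub_le_self _ (sq_nonneg _)
      _ = D ^ 2 / (2 * a T) := one_div_mul_eq_div _ _
  rw [Finset.sum_congr rfl hstep, Finset.sum_add_distrib, ← Finset.sum_div]
  gcongr

theorem one_sub_mul_inner_le_inner_add (u v w : H) {μ : ℝ} (hμ : 0 ≤ μ) :
    (1 - μ) * ⟪u, w⟫ ≤ ⟪(1 - μ) • u + μ • v, w⟫ + μ * (‖v‖ * ‖w‖) := by
  have hcauchy : 0 ≤ ⟪v, w⟫ + ‖v‖ * ‖w‖ :=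
    neg_le_iff_add_nonneg.1 (neg_le_of_abs_le (abs_real_inner_le_norm v w))
  rw [inner_add_left, real_inner_smul_left, real_inner_smul_left, add_assoc, ← mul_add]
  exact le_add_of_nonneg_right (mul_nonneg hμ hcauchy)

variable {f : H → ℝ} {x u v : ℕ → H} {z : H} {B A D μ : ℝ} {α : ℕ → ℝ}

theorem one_sub_mul_sum_sub_le_of_antitoneOn
    (hu : ∀ t, 1 ≤ t → f (x t) + ⟪u t, z - x t⟫ ≤ f z)
    (hB : ∀ t, 1 ≤ t → ‖u t‖ ≤ B) (hA : ∀ t, 1 ≤ t → ‖v t‖ ≤ A) (hμ0 : 0 ≤ μ) (hμ1 : μ ≤ 1)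
    (hα_pos : ∀ t, 1 ≤ t → 0 < α t) (hα : AntitoneOn α (Set.Ici 1))
    (hx : ∀ t, 1 ≤ t → x (t + 1) = x t - α t • ((1 - μ) • u t + μ • v t))
    (hD : ∀ t, 1 ≤ t → ‖x t - z‖ ≤ D) {T : ℕ} (hT : 1 ≤ T) :
    (1 - μ) * ∑ t ∈ Finset.Icc 1 T, (f (x t) - f z)
      ≤ D ^ 2 / (2 * α T) + μ * D * A * T + (B + A) ^ 2 / 2 * ∑ t ∈ Finset.Icc 1 T, α t := by
  set g : ℕ → H := fun t ↦ (1 - μ) • u t + μ • v t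
  have hinner (t : ℕ) (ht : 1 ≤ t) : (1 - μ) * (f (x t) - f z) ≤ ⟪g t, x t - z⟫ + μ * D * A := by
    have hconvex : f (x t) - f z ≤ ⟪u t, x t - z⟫ := by
      have h := hu t ht
      rw [← neg_sub, inner_neg_right] at h
      linarith
    calc (1 - μ) * (f (x t) - f z) ≤ (1 - μ) * ⟪u t, x t - z⟫ :=
          mul_le_mul_of_nonneg_left hconvex (sub_nonneg.2 hμ1)
      _ ≤ ⟪g t, x t - z⟫ + μ * (‖v t‖ * ‖x t - z‖) :=
          one_sub_mul_inner_le_inner_add (u t) (v t) (x t - z) hμ0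
      _ ≤ ⟪g t, x t - z⟫ + μ * (A * D) := by
          have hA_nonneg : 0 ≤ A := (norm_nonneg _).trans (hA t ht)
          gcongr
          exacts [hA t ht, hD t ht]
      _ = ⟪g t, x t - z⟫ + μ * D * A := by ring
  have hg (t : ℕ) (ht : 1 ≤ t) : ‖g t‖ ≤ B + A :=
    (norm_one_sub_smul_add_smul_le (u t) (v t) hμ0 hμ1).trans (add_le_add (hB t ht) (hA t ht))
  have hsquares : ∑ t ∈ Finset.Icc 1 T, α t * ‖g t‖ ^ 2
      ≤ (B + A) ^ 2 * ∑ t ∈ Finset.Icc 1 T, α t := by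
    rw [mul_comm, Finset.sum_mul]
    refine Finset.sum_le_sum fun t ht ↦ ?_
    have ht1 := (Finset.mem_Icc.1 ht).1
    exact mul_le_mul_of_nonneg_left (pow_le_pow_left₀ (norm_nonneg _) (hg t ht1) 2)
      (hα_pos t ht1).le
  calc (1 - μ) * ∑ t ∈ Finset.Icc 1 T, (f (x t) - f z)
      ≤ ∑ t ∈ Finset.Icc 1 T, (⟪g t, x t - z⟫ + μ * D * A) := by
        rw [Finset.mul_sum]
        exact Finset.sum_le_sum fun t ht ↦ hinner t (Finset.mem_Icc.1 ht).1
    _ = ∑ t ∈ Finset.Icc 1 T, ⟪g t, x t - z⟫ + μ * D * A * T := by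
        simp [Finset.sum_add_distrib, mul_comm]
    _ ≤ D ^ 2 / (2 * α T) + μ * D * A * T + (B + A) ^ 2 / 2 * ∑ t ∈ Finset.Icc 1 T, α t := by
        linarith [sum_inner_le_of_antitoneOn hα_pos hα hx hD hT]

theorem hpe_finite_regret_bound_general
    (hu : ∀ t, 1 ≤ t → f (x t) + ⟪u t, z - x t⟫ ≤ f z)
    (hB : ∀ t, 1 ≤ t → ‖u t‖ ≤ B) (hA : ∀ t, 1 ≤ t → ‖v t‖ ≤ A) (hμ0 : 0 ≤ μ) (hμ1 : μ < 1)
    {C p : ℝ} (hC : 0 < C) (hp0 : 0 ≤ p) (hp1 : p < 1)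
    (hα : ∀ t : ℕ, 1 ≤ t → α t = C / (t : ℝ) ^ p)
    (hx : ∀ t, 1 ≤ t → x (t + 1) = x t - α t • ((1 - μ) • u t + μ • v t))
    (hD : ∀ t, 1 ≤ t → ‖x t - z‖ ≤ D) {T : ℕ} (hT : 1 ≤ T) :
    ∑ t ∈ Finset.Icc 1 T, (f (x t) - f z)
      ≤ D ^ 2 * (T : ℝ) ^ p / (2 * C * (1 - μ)) + μ * D * A * T / (1 - μ)
        + C * (B + A) ^ 2 * (T : ℝ) ^ (1 - p) / (2 * (1 - μ) * (1 - p)) := by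
  have hμ : 0 < 1 - μ := sub_pos.2 hμ1
  have hp : 0 < 1 - p := sub_pos.2 hp1
  have hα_pos (t : ℕ) (ht : 1 ≤ t) : 0 < α t := by
    rw [hα t ht]
    exact div_pos hC (Real.rpow_pos_of_pos (Nat.cast_pos.2 ht) p)
  have hα_antitone : AntitoneOn α (Set.Ici 1) :=
    (antitoneOn_div_rpow hC.le hp0).congr fun t ht ↦ (hα t ht).symm
  have hα_sum : ∑ t ∈ Finset.Icc 1 T, α t ≤ C * ((T : ℝ) ^ (1 - p) / (1 - p)) :=
    calc ∑ t ∈ Finset.Icc 1 T, α t = C * ∑ t ∈ Finset.Icc 1 T, 1 / (t : ℝ) ^ p := by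
          rw [Finset.mul_sum]
          exact Finset.sum_congr rfl fun t ht ↦ by
            rw [hα t (Finset.mem_Icc.1 ht).1, mul_one_div]
      _ ≤ C * ((T : ℝ) ^ (1 - p) / (1 - p)) :=
          mul_le_mul_of_nonneg_left (sum_Icc_one_div_rpow_le hp0 hp1 T) hC.le
  calc ∑ t ∈ Finset.Icc 1 T, (f (x t) - f z)
      ≤ (D ^ 2 / (2 * α T) + μ * D * A * T
          + (B + A) ^ 2 / 2 * ∑ t ∈ Finset.Icc 1 T, α t) / (1 - μ) :=
        (le_div_iff₀' hμ).2 <|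
          one_sub_mul_sum_sub_le_of_antitoneOn hu hB hA hμ0 hμ1.le hα_pos hα_antitone hx hD hT
    _ ≤ (D ^ 2 / (2 * α T) + μ * D * A * T
          + (B + A) ^ 2 / 2 * (C * ((T : ℝ) ^ (1 - p) / (1 - p)))) / (1 - μ) := by gcongr
    _ = _ := by
        rw [hα T hT]
        field_simp

end Regret

/-- Combined finite-horizon regret bound on the benign contrastive loss `L_CL` under
the HPE attack's gradient descent on the mixed loss with step size `α_t = C / t^p`. -/
theorem hpe_finite_regret_bound
    {H : Type*} [NormedAddCommGroup H] [InnerProductSpace ℝ H] [CompleteSpace H]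
    (LCL LHPE : H → ℝ)
    (hdiffCL : ∀ θ : H, DifferentiableAt ℝ LCL θ)
    (hdiffHPE : ∀ θ : H, DifferentiableAt ℝ LHPE θ)
    (hconv : ∀ θ₁ θ₂ : H, LCL θ₂ ≥ LCL θ₁ + ⟪gradient LCL θ₁, θ₂ - θ₁⟫)
    (Gbenign Gattack : ℝ) (hGb : 0 < Gbenign) (hGa : 0 < Gattack)
    (hgradCL : ∀ θ : H, ‖gradient LCL θ‖ ≤ Gbenign)
    (hgradHPE : ∀ θ : H, ‖gradient LHPE θ‖ ≤ Gattack)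
    (μ : ℝ) (hμ : μ ∈ Set.Ioo (0 : ℝ) 1)
    (C : ℝ) (hC : 0 < C) (p : ℝ) (hp : p ∈ Set.Ioo (0 : ℝ) 1)
    (α : ℕ → ℝ) (hα : ∀ t : ℕ, 1 ≤ t → α t = C / (t : ℝ) ^ p)
    (θseq : ℕ → H)
    (hupdate : ∀ t : ℕ, 1 ≤ t →
      θseq (t + 1) = θseq t
        - α t • ((1 - μ) • gradient LCL (θseq t) + μ • gradient LHPE (θseq t)))
    (θstar : H)
    (D : ℝ) (hD : 0 < D) (hdist : ∀ t : ℕ, 1 ≤ t → ‖θseq t - θstar‖ ≤ D)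
    (T : ℕ) (hT : 1 ≤ T) :
    ∑ t ∈ Finset.Icc 1 T, (LCL (θseq t) - LCL θstar)
      ≤ D ^ 2 * (T : ℝ) ^ p / (2 * C * (1 - μ))
        + μ * D * Gattack * T / (1 - μ)
        + C * (Gbenign + Gattack) ^ 2 * (T : ℝ) ^ (1 - p) / (2 * (1 - μ) * (1 - p)) :=
  hpe_finite_regret_bound_general (fun _ _ ↦ hconv _ _) (fun _ _ ↦ hgradCL _)
    (fun _ _ ↦ hgradHPE _) hμ.1.le hμ.2 hC hp.1.le hp.2 hα hupdate hdist hT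
end
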